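/- arXiv:1406.1121 — 2 statements merged into one kernel-verified Lean document; each statement's English description precedes it below -/
import Mathlib

section
/- Let L be an idempotent semifield and f : ℤ_max →+* L an injective semiring homomorphism such that L is a finite extension of ℤ_max (there is a finite subset S ⊆ L such that every element of L is a finite sum of elements of the form f(a) * s with a ∈ ℤ_max, s ∈ S). Then the subgroup Z(f) := {w ∈ Lˣ : ∃ a : ℤ, (w : L) = f (trop a)} has finite index in Lˣ, i.e., every finite extension of ℤ_max has finite unit index. -/
/-!
Order `L` by `x ≤ y ↔ x + y = y`, and let a finite set `S` of nonzero elements generate `L` over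
`K = ℤ_max`. Every element of `L` lies below some element of `f(K)`, so a single unit `u` of `K`
satisfies `f(u)⁻¹ ≤ s ≤ f(u)` for all `s ∈ S`. If `x = ∑ f(c_s) s` is nonzero and `b = ∑ c_s`, then
`f(b) f(u)⁻¹ ≤ x ≤ f(b) f(u)`, so every coset of `Z(f)` meets the interval `[f(u)⁻¹, f(u)]`. This
interval is finite: its elements are sums `∑ f(c_s) s` whose coefficients may be taken in
`[f(u)⁻², f(u)²]`, and intervals of `ℤ` are finite.
-/

open Tropical

/-- The subgroup `Z(f)` of `Lˣ` consisting of units lying in the image under `f` of the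
nonzero elements of `ℤ_max = Tropical (WithTop ℤ)`. -/
def tropUnitSubgroup {L : Type*} [DivisionSemiring L]
    (f : Tropical (WithTop ℤ) →+* L) : Subgroup Lˣ where
  carrier := {w : Lˣ | ∃ a : ℤ, (w : L) = f (trop (a : WithTop ℤ))}
  one_mem' := ⟨0, by simp⟩
  mul_mem' := by
    rintro v w ⟨a, ha⟩ ⟨b, hb⟩
    refine ⟨a + b, ?_⟩
    rw [Units.val_mul, ha, hb, ← map_mul, ← Tropical.trop_add, ← WithTop.coe_add]
  inv_mem' := by
    rintro w ⟨a, ha⟩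
    refine ⟨-a, Units.inv_eq_of_mul_eq_one_right ?_⟩
    have h1 : trop ((a : WithTop ℤ)) * trop (((-a : ℤ) : WithTop ℤ)) = 1 := by
      rw [← Tropical.trop_add, ← WithTop.coe_add, add_neg_cancel, WithTop.coe_zero,
        Tropical.trop_zero]
    rw [ha, ← map_mul, h1, map_one]

open Set

section Group

variable {G : Type*} [Group G] {H : Subgroup G} {F : Set G}

theorem finiteIndex_of_forall_exists_mul_mem (hF : F.Finite) (h : ∀ g : G, ∃ k ∈ H, k * g ∈ F) :
    H.FiniteIndex := by
  have : Finite F := hF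
  have hsurj : Function.Surjective fun x : F ↦ (QuotientGroup.mk (x : G)⁻¹ : G ⧸ H) := by
    intro q
    obtain ⟨g, rfl⟩ := QuotientGroup.mk_surjective q
    obtain ⟨k, hk, hkg⟩ := h g⁻¹
    exact ⟨⟨k * g⁻¹, hkg⟩, by simpa using QuotientGroup.mk_mul_of_mem g (H.inv_mem hk)⟩
  exact Subgroup.finiteIndex_iff_finite_quotient.2 (Finite.of_surjective _ hsurj)

end Group

section LeftSpans

variable {K L : Type*} [Semiring K] [Semiring L] {f : K →+* L} {S : Finset L}

/-- `S` generates `L` as a left semimodule over `K` acting through `f`: the analogue for semirings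
of `RingHom.Finite`, with explicit generators. -/
def LeftSpans (f : K →+* L) (S : Finset L) : Prop :=
  ∀ x : L, ∃ c : L → K, ∑ s ∈ S, f (c s) * s = x

theorem leftSpans_of_forall_mem_closure
    (h : ∀ x : L, x ∈ AddSubmonoid.closure {y : L | ∃ a : K, ∃ s ∈ S, y = f a * s}) :
    LeftSpans f S := by
  intro x
  let : Module K L := Module.compHom L f
  have hx : x ∈ Submodule.span K (S : Set L) := by
    rw [← Submodule.mem_toAddSubmonoid, Submodule.span_eq_closure]
    refine AddSubmonoid.closure_mono ?_ (h x)
    rintro _ ⟨a, s, hs, rfl⟩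
    exact smul_mem_smul (mem_univ a) (Finset.mem_coe.2 hs)
  obtain ⟨c, -, hc⟩ := Submodule.mem_span_finset.1 hx
  exact ⟨c, hc⟩

theorem LeftSpans.erase_zero [DecidableEq L] (hS : LeftSpans f S) : LeftSpans f (S.erase 0) := by
  intro x
  obtain ⟨c, hc⟩ := hS x
  exact ⟨c, by rwa [Finset.sum_erase (f := fun s ↦ f (c s) * s) S (mul_zero _)]⟩

end LeftSpans

section CanonicallyOrdered

variable {L : Type*} [DivisionSemiring L] [PartialOrder L] [CanonicallyOrderedAdd L]

instance posMulReflectLE_of_canonicallyOrderedAdd : PosMulReflectLE L where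
  elim := by
    rintro ⟨a, ha⟩ b c (h : a * b ≤ a * c)
    simpa only [inv_mul_cancel_left₀ ha.ne'] using mul_le_mul_right h a⁻¹

instance mulPosReflectLE_of_canonicallyOrderedAdd : MulPosReflectLE L where
  elim := by
    rintro ⟨a, ha⟩ b c (h : b * a ≤ c * a)
    simpa only [mul_inv_cancel_right₀ ha.ne'] using mul_le_mul_left h a⁻¹

variable {K : Type*} [Semiring K] [IsOrderedAddMonoid L] {f : K →+* L} {S : Finset L}

theorem LeftSpans.exists_le_map (hS : LeftSpans f S) (x : L) : ∃ a : K, x ≤ f a := by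
  set T : L := 1 + ∑ s ∈ S, s
  have hT : 0 < T := zero_lt_one.trans_le le_self_add
  have hsT : ∀ s ∈ S, s ≤ T := fun s hs ↦
    (Finset.single_le_sum_of_canonicallyOrdered (f := id) hs).trans le_add_self
  obtain ⟨c, hc⟩ := hS (x * T)
  refine ⟨∑ s ∈ S, c s, le_of_mul_le_mul_right ?_ hT⟩
  calc x * T = ∑ s ∈ S, f (c s) * s := hc.symm
    _ ≤ ∑ s ∈ S, f (c s) * T := by gcongr with s hs; exact hsT s hs
    _ = f (∑ s ∈ S, c s) * T := by rw [map_sum, Finset.sum_mul]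

theorem LeftSpans.exists_units_subset_Icc (hK : ∀ a : K, a ≠ 0 → IsUnit a) (hS : LeftSpans f S)
    {T : Finset L} (hT : 0 ∉ T) : ∃ u : Kˣ, (T : Set L) ⊆ Icc (f ↑u⁻¹) (f u) := by
  obtain ⟨a, ha⟩ := hS.exists_le_map (1 + ∑ t ∈ T, (t + t⁻¹))
  have ha0 : a ≠ 0 := by
    rintro rfl
    exact (zero_lt_one.trans_le (le_self_add.trans ha)).ne' (map_zero f)
  obtain ⟨u, rfl⟩ := hK a ha0
  refine ⟨u, fun t ht ↦ ?_⟩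
  have htu : t + t⁻¹ ≤ f u :=
    (Finset.single_le_sum_of_canonicallyOrdered (f := fun t ↦ t + t⁻¹) ht).trans
      (le_add_self.trans ha)
  have ht0 : 0 < t := pos_iff_ne_zero.2 (ne_of_mem_of_not_mem ht hT)
  refine ⟨?_, le_self_add.trans htu⟩
  rw [map_units_inv]
  exact inv_le_of_inv_le₀ ht0 (le_add_self.trans htu)

theorem LeftSpans.exists_units_map_mul_mem_Icc (hK : ∀ a : K, a ≠ 0 → IsUnit a)
    (hS : LeftSpans f S) {u : Kˣ} (hu : (S : Set L) ⊆ Icc (f ↑u⁻¹) (f u)) {x : L} (hx : x ≠ 0) :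
    ∃ v : Kˣ, f v * x ∈ Icc (f ↑u⁻¹) (f u) := by
  obtain ⟨c, rfl⟩ := hS x
  have hlow : f (∑ s ∈ S, c s) * f ↑u⁻¹ ≤ ∑ s ∈ S, f (c s) * s := by
    rw [map_sum, Finset.sum_mul]
    gcongr with s hs
    exact (hu hs).1
  have hupp : ∑ s ∈ S, f (c s) * s ≤ f (∑ s ∈ S, c s) * f u := by
    rw [map_sum, Finset.sum_mul]
    gcongr with s hs
    exact (hu hs).2
  have hc : ∑ s ∈ S, c s ≠ 0 := by
    intro h
    rw [h, map_zero, zero_mul] at hupp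
    exact hx (nonpos_iff_eq_zero.1 hupp)
  obtain ⟨v, hv⟩ := hK _ hc
  have hv_inv : f ↑v⁻¹ * f v = 1 := by rw [← map_mul, Units.inv_mul, map_one]
  rw [← hv] at hlow hupp
  refine ⟨v⁻¹, ?_, ?_⟩
  · simpa only [← mul_assoc, hv_inv, one_mul] using mul_le_mul_right hlow (f ↑v⁻¹)
  · simpa only [← mul_assoc, hv_inv, one_mul] using mul_le_mul_right hupp (f ↑v⁻¹)

theorem LeftSpans.exists_coeff_mem_Icc (hidem : ∀ x : L, x + x = x) (hS : LeftSpans f S) {u : Kˣ}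
    (hu : (S : Set L) ⊆ Icc (f ↑u⁻¹) (f u)) {y : L} (hy : y ∈ Icc (f ↑u⁻¹) (f u)) :
    ∃ c : L → K, (∀ s ∈ S, f (c s) ∈ Icc (f ↑(u ^ 2)⁻¹) (f ↑(u ^ 2))) ∧
      ∑ s ∈ S, f (c s) * s = y := by
  obtain ⟨c, hc⟩ := hS y
  have hsq : f ↑(u ^ 2) = f u * f u := by rw [sq, Units.val_mul, map_mul]
  have hsum_le : ∑ s ∈ S, f ↑(u ^ 2)⁻¹ * s ≤ y := by
    refine Finset.sum_induction _ (· ≤ y) (fun _ _ ha hb ↦ (add_le_add ha hb).trans_eq (hidem y))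
      zero_le fun s hs ↦ ?_
    calc f ↑(u ^ 2)⁻¹ * s ≤ f ↑(u ^ 2)⁻¹ * f u := by gcongr; exact (hu hs).2
      _ = f ↑u⁻¹ := by rw [← map_mul, ← Units.val_mul]; congr 2; group
      _ ≤ y := hy.1
  -- Each `u⁻² s ≤ u⁻¹ ≤ y` is absorbed by `y`, so every coefficient can be raised above `u⁻²`.
  have habsorb : ∑ s ∈ S, f (c s + ↑(u ^ 2)⁻¹) * s = y := by
    simp only [map_add, add_mul, Finset.sum_add_distrib, hc]
    exact ((add_le_add_right hsum_le y).trans_eq (hidem y)).antisymm le_self_add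
  refine ⟨fun s ↦ c s + ↑(u ^ 2)⁻¹, fun s hs ↦ ⟨?_, ?_⟩, habsorb⟩
  · rw [map_add]
    exact le_add_self
  · have hus : f (c s + ↑(u ^ 2)⁻¹) * f ↑u⁻¹ ≤ f u :=
      calc f (c s + ↑(u ^ 2)⁻¹) * f ↑u⁻¹ ≤ f (c s + ↑(u ^ 2)⁻¹) * s := by
            gcongr; exact (hu hs).1
        _ ≤ ∑ s ∈ S, f (c s + ↑(u ^ 2)⁻¹) * s :=
            Finset.single_le_sum_of_canonicallyOrdered
              (f := fun s ↦ f (c s + ↑(u ^ 2)⁻¹) * s) hs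
        _ ≤ f u := habsorb.trans_le hy.2
    have hfu : 0 < f u := pos_iff_ne_zero.2 (u.isUnit.map f).ne_zero
    rwa [map_units_inv, mul_inv_le_iff₀ hfu, ← hsq] at hus

theorem LeftSpans.finite_Icc (hidem : ∀ x : L, x + x = x) (hS : LeftSpans f S) {u : Kˣ}
    (hu : (S : Set L) ⊆ Icc (f ↑u⁻¹) (f u))
    (hfin : (range f ∩ Icc (f ↑(u ^ 2)⁻¹) (f ↑(u ^ 2))).Finite) :
    (Icc (f ↑u⁻¹) (f u)).Finite := by
  set R := range f ∩ Icc (f ↑(u ^ 2)⁻¹) (f ↑(u ^ 2))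
  have : Finite R := hfin
  refine (finite_range fun r : S → R ↦ ∑ s, (r s : L) * s).subset fun y hy ↦ ?_
  obtain ⟨c, hc, hcy⟩ := hS.exists_coeff_mem_Icc hidem hu hy
  refine ⟨fun s ↦ ⟨f (c s), mem_range_self _, hc s s.2⟩, ?_⟩
  rw [← hcy, ← Finset.sum_coe_sort S]

theorem LeftSpans.finiteIndex_range_unitsMap (hidem : ∀ x : L, x + x = x)
    (hK : ∀ a : K, a ≠ 0 → IsUnit a)
    (hfin : ∀ u v : Kˣ, (range f ∩ Icc (f u) (f v)).Finite) (hS : LeftSpans f S) :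
    (Units.map (f : K →* L)).range.FiniteIndex := by
  classical
  obtain ⟨u, hu⟩ := hS.exists_units_subset_Icc hK (S.notMem_erase 0)
  have hF : (Units.val ⁻¹' Icc (f ↑u⁻¹) (f u)).Finite :=
    (hS.erase_zero.finite_Icc hidem hu (hfin _ _)).preimage Units.val_injective.injOn
  refine finiteIndex_of_forall_exists_mul_mem hF fun w ↦ ?_
  obtain ⟨v, hv⟩ := hS.erase_zero.exists_units_map_mul_mem_Icc hK hu w.ne_zero
  exact ⟨Units.map (f : K →* L) v, ⟨v, rfl⟩, hv⟩

end CanonicallyOrdered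

section Antitone

variable {α β : Type*} [LinearOrder α] [PartialOrder β] {g : α → β}

theorem range_inter_Icc_subset_image_uIcc_of_antitone (hg : Antitone g) (p q : α) :
    range g ∩ Icc (g p) (g q) ⊆ g '' uIcc p q := by
  rintro _ ⟨⟨c, rfl⟩, hpc, hcq⟩
  rcases lt_or_ge c (p ⊓ q) with hlow | hlow
  · exact ⟨q, right_mem_uIcc, (hg (hlow.le.trans inf_le_right)).antisymm hcq⟩
  rcases lt_or_ge (p ⊔ q) c with hupp | hupp
  · exact ⟨p, left_mem_uIcc, hpc.antisymm (hg (le_sup_left.trans hupp.le))⟩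
  · exact mem_image_of_mem g ⟨hlow, hupp⟩

end Antitone

section Tropical

theorem antitone_of_tropical {R L : Type*} [LinearOrderedAddCommMonoidWithTop R] [Semiring L]
    [PartialOrder L] [CanonicallyOrderedAdd L] (f : Tropical R →+* L) : Antitone f := by
  intro a b hab
  calc f b ≤ f a + f b := le_add_self
    _ = f a := by rw [← map_add, Tropical.add_eq_left hab]

theorem add_self_of_tropical {R L : Type*} [LinearOrderedAddCommMonoidWithTop R] [Semiring L]
    (f : Tropical R →+* L) (x : L) : x + x = x := by
  calc x + x = f (1 + 1) * x := by rw [map_add, map_one, add_mul, one_mul]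
    _ = x := by rw [Tropical.add_self, map_one, one_mul]

theorem isUnit_tropical_of_ne_zero {R : Type*} [LinearOrderedAddCommGroupWithTop R]
    {a : Tropical R} (ha : a ≠ 0) : IsUnit a := by
  refine IsUnit.of_mul_eq_one (trop (-untrop a)) (untrop_injective ?_)
  have ha' : untrop a ≠ ⊤ := fun h ↦ ha (untrop_injective h)
  simpa using LinearOrderedAddCommGroupWithTop.add_neg_cancel_of_ne_top ha'

theorem exists_trop_coe_eq {α : Type*} {a : Tropical (WithTop α)} (ha : a ≠ 0) :
    ∃ n : α, trop (n : WithTop α) = a :=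
  (WithTop.ne_top_iff_exists.1 fun h : untrop a = ⊤ ↦ ha (untrop_injective h)).imp
    fun _ hn ↦ untrop_injective hn

theorem finite_Icc_tropical {α : Type*} [PartialOrder α] [LocallyFiniteOrder α]
    {p q : Tropical (WithTop α)} (hp : p ≠ 0) (hq : q ≠ 0) : (Icc p q).Finite := by
  obtain ⟨m, rfl⟩ := exists_trop_coe_eq hp
  obtain ⟨n, rfl⟩ := exists_trop_coe_eq hq
  have hIcc : Icc (trop (m : WithTop α)) (trop n) = tropOrderIso '' (WithTop.some '' Icc m n) := by
    rw [← WithTop.Icc_coe, OrderIso.image_Icc, tropOrderIso_coe_fn]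
  rw [hIcc]
  exact ((finite_Icc m n).image _).image _

theorem finite_uIcc_tropical {α : Type*} [LinearOrder α] [LocallyFiniteOrder α]
    {p q : Tropical (WithTop α)} (hp : p ≠ 0) (hq : q ≠ 0) : (uIcc p q).Finite := by
  rw [uIcc_eq_union]
  exact (finite_Icc_tropical hp hq).union (finite_Icc_tropical hq hp)

theorem tropUnitSubgroup_eq_range {L : Type*} [DivisionSemiring L]
    (f : Tropical (WithTop ℤ) →+* L) :
    tropUnitSubgroup f = (Units.map (f : Tropical (WithTop ℤ) →* L)).range := by
  ext w
  constructor
  · rintro ⟨a, ha⟩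
    obtain ⟨u, hu⟩ := isUnit_tropical_of_ne_zero (trop_coe_ne_zero a)
    exact ⟨u, Units.ext ((congrArg f hu).trans ha.symm)⟩
  · rintro ⟨u, rfl⟩
    obtain ⟨a, ha⟩ := exists_trop_coe_eq u.ne_zero
    exact ⟨a, congrArg f ha.symm⟩

end Tropical

theorem finite_extension_finite_unit_index_general {L : Type*} [DivisionSemiring L]
    (f : Tropical (WithTop ℤ) →+* L)
    (hfin : ∃ S : Finset L, ∀ x : L,
      x ∈ AddSubmonoid.closure {y : L | ∃ a : Tropical (WithTop ℤ), ∃ s ∈ S, y = f a * s}) :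
    (tropUnitSubgroup f).FiniteIndex := by
  obtain ⟨S, hS⟩ := hfin
  have hidem : ∀ x : L, x + x = x := add_self_of_tropical f
  let : IdemSemiring L := IdemSemiring.ofSemiring hidem
  rw [tropUnitSubgroup_eq_range]
  refine (leftSpans_of_forall_mem_closure hS).finiteIndex_range_unitsMap hidem
    (fun _ ↦ isUnit_tropical_of_ne_zero) fun u v ↦ ?_
  exact ((finite_uIcc_tropical u.ne_zero v.ne_zero).image f).subset
    (range_inter_Icc_subset_image_uIcc_of_antitone (antitone_of_tropical f) _ _)

/-- Every finite extension of `ℤ_max` has finite unit index: if `L` is an idempotent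
semifield and `f : ℤ_max →+* L` is an injective semiring homomorphism making `L` a finitely
generated semimodule over `ℤ_max`, then `Z(f)` has finite index in `Lˣ`. -/
theorem finite_extension_finite_unit_index {L : Type*} [Semifield L]
    (hidem : ∀ x : L, x + x = x)
    (f : Tropical (WithTop ℤ) →+* L) (hf : Function.Injective f)
    (hfin : ∃ S : Finset L, ∀ x : L,
      x ∈ AddSubmonoid.closure {y : L | ∃ a : Tropical (WithTop ℤ), ∃ s ∈ S, y = f a * s}) :
    (tropUnitSubgroup f).FiniteIndex := by
  exact finite_extension_finite_unit_index_general f hfin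
end

section
/- Let D be a (not necessarily commutative) division semiring with idempotent addition, and let f : ℤ_max →+* D be an injective semiring homomorphism whose range lies in the center of D, such that D is finite as a left semimodule over ℤ_max via f (there is a finite subset S ⊆ D such that every element of D is a finite sum of elements of the form f(a) * s with a ∈ ℤ_max, s ∈ S). Then D is commutative, and there exist a positive integer n and a semiring isomorphism φ : D ≃+* ℤ_max such that φ (f (trop a)) = trop (n * a) for all a : ℤ; that is, every finite division semialgebra over ℤ_max is F^(n) for some n. -/
open Tropical

/-!
Order `D` by `a ≤ b ↔ a + b = b` and let `t = f (trop (-1)) > 1`. Truncating at `1` a sum of terms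
`t ^ n * s`, with `s` in a finite generating set, only the terms not below `1` matter; if the sum is
not above `t` neither are they, so there are finitely many of them and `{x | 1 ≤ x ∧ ¬ t ≤ x}` is
finite. Hence the powers of any `x > 1` exceed `t`, and then every element: the order is
Archimedean. If `p + q = 1` then `p ^ n + q = 1` for all `n`; when `p < 1`, the Archimedean property
gives `p ^ n ≤ q` for some `n`, so `q = 1`. Applied to `p = (x + y)⁻¹ * x` and
`q = (x + y)⁻¹ * y`, this makes the order total. Finiteness now yields a least element `g > 1`, and
every nonzero element is a power of `g`.
-/

/-- An idempotent division semiring, ordered by `a ≤ b ↔ a + b = b`. -/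
class IdemDivisionSemiring (D : Type*) extends DivisionSemiring D, IdemSemiring D

section IdemSemiring
variable {R : Type*} [IdemSemiring R]

lemma pow_add_eq_one_of_add_eq_one {p q : R} (h : p + q = 1) (n : ℕ) : p ^ n + q = 1 := by
  have hp : p ≤ 1 := h ▸ le_self_add
  have hq : q ≤ 1 := h ▸ le_add_self
  induction n with
  | zero => rw [pow_zero, hq.add_eq_left]
  | succ n ih =>
    have hpq : p ^ n * q ≤ q := mul_le_of_le_one_left' (pow_le_one' hp n)
    calc p ^ (n + 1) + q = p ^ (n + 1) + (p ^ n * q + q) := by rw [hpq.add_eq_right]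
      _ = p ^ n * (p + q) + q := by rw [mul_add, pow_succ, add_assoc]
      _ = 1 := by rw [h, mul_one, ih]

/- Up to the summand `a`, an element not above `b` is the supremum of those of its terms that are
neither below `a` nor above `b`. -/
lemma finite_setOf_le_and_not_le_of_closure_eq_top {G : Set R} (hG : AddSubmonoid.closure G = ⊤)
    {a b : R} (hfin : {y ∈ G | ¬ y ≤ a ∧ ¬ b ≤ y}.Finite) : {x | a ≤ x ∧ ¬ b ≤ x}.Finite := by
  set U := {y ∈ G | ¬ y ≤ a ∧ ¬ b ≤ y}
  have mem_supClosure (x : R) (hx : ¬ b ≤ x) : x ⊔ a ∈ supClosure (insert a U) := by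
    have ha : a ∈ supClosure (insert a U) := subset_supClosure (Set.mem_insert a U)
    have hmem : x ∈ AddSubmonoid.closure G := hG ▸ AddSubmonoid.mem_top x
    induction hmem using AddSubmonoid.closure_induction with
    | mem y hy =>
      by_cases hya : y ≤ a
      · rwa [sup_eq_right.2 hya]
      · exact sup_mem_supClosure (Set.mem_insert_of_mem a ⟨hy, hya, hx⟩) (Set.mem_insert a U)
    | zero => rwa [sup_eq_right.2 zero_le]
    | add y z _ _ ihy ihz =>
      rw [add_eq_sup] at hx ⊢
      rw [sup_sup_distrib_right]
      exact supClosed_supClosure (ihy fun h ↦ hx (h.trans le_sup_left))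
        (ihz fun h ↦ hx (h.trans le_sup_right))
  refine (hfin.insert a).supClosure.subset fun x ⟨hax, hbx⟩ ↦ ?_
  simpa [hax] using mem_supClosure x hbx

end IdemSemiring

section GroupWithZero
variable {G : Type*} [GroupWithZero G] [PartialOrder G] [PosMulReflectLT G] [MulPosReflectLT G]
  {g : G}

lemma exists_zpow_le_of_forall_exists_le_pow (harch : ∀ x, ∃ n : ℕ, x ≤ g ^ n) {x : G}
    (hx : 0 < x) : ∃ n : ℤ, g ^ n ≤ x := by
  obtain ⟨n, hn⟩ := harch x⁻¹
  refine ⟨-n, ?_⟩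
  rw [zpow_neg, zpow_natCast]
  exact inv_le_of_inv_le₀ hx hn

lemma exists_zpow_eq_of_isLeast_one_lt [ZeroLEOneClass G] (hg : IsLeast {x | 1 < x} g)
    (harch : ∀ x, ∃ n : ℕ, x ≤ g ^ n) {x : G} (hx : 0 < x) : ∃ n : ℤ, g ^ n = x := by
  have hg1 : 1 < g := hg.1
  have hg0 : 0 < g := zero_le_one.trans_lt hg1
  obtain ⟨k, hk⟩ := harch x
  have hbdd (z : ℤ) (hz : g ^ z ≤ x) : z ≤ k := by
    rw [← zpow_le_zpow_iff_right₀ hg1]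
    exact hz.trans (by exact_mod_cast hk)
  obtain ⟨n, hn, hmax⟩ :=
    Int.exists_greatest_of_bdd ⟨k, hbdd⟩ (exists_zpow_le_of_forall_exists_le_pow harch hx)
  have hgn : 0 < g ^ n := zpow_pos hg0 n
  refine ⟨n, hn.eq_of_not_lt fun hlt ↦ ?_⟩
  have hle : g ≤ (g ^ n)⁻¹ * x := hg.2 (by rwa [Set.mem_ofPred_eq, lt_inv_mul_iff₀ hgn, mul_one])
  rw [le_inv_mul_iff₀ hgn, ← zpow_add_one₀ hg0.ne'] at hle
  exact absurd (hmax _ hle) (by omega)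

end GroupWithZero

namespace IdemDivisionSemiring

/-- The idempotent division semiring structure on a division semiring with idempotent addition. -/
abbrev ofDivisionSemiring {D : Type*} [DivisionSemiring D] (h : ∀ a : D, a + a = a) :
    IdemDivisionSemiring D where
  __ := ‹DivisionSemiring D›
  __ := IdemSemiring.ofSemiring h

variable {D : Type*} [IdemDivisionSemiring D]

instance : PosMulReflectLE D where
  elim a b c h := by simpa [a.2.ne'] using mul_le_mul_right h (a : D)⁻¹

instance : MulPosReflectLE D where
  elim a b c h := by simpa [a.2.ne'] using mul_le_mul_left h (a : D)⁻¹

instance : PosMulStrictMono D := PosMulReflectLT.toPosMulStrictMono D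

lemma eq_one_or_eq_one_of_add_eq_one (harch : ∀ x : D, 1 < x → ∀ y, ∃ n : ℕ, y ≤ x ^ n) {p q : D}
    (h : p + q = 1) : p = 1 ∨ q = 1 := by
  rcases eq_or_ne p 0 with rfl | hp
  · exact .inr (by simpa using h)
  rcases eq_or_ne q 0 with rfl | hq
  · exact .inl (by simpa using h)
  rw [← pos_iff_ne_zero] at hp hq
  have hp1 : p ≤ 1 := h ▸ le_self_add
  refine hp1.eq_or_lt.imp_right fun hlt ↦ ?_
  obtain ⟨n, hn⟩ := harch p⁻¹ ((one_lt_inv₀ hp).2 hlt) q⁻¹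
  rw [inv_pow, inv_le_inv₀ hq (pow_pos hp n)] at hn
  rw [← hn.add_eq_right, pow_add_eq_one_of_add_eq_one h]

lemma le_total_of_archimedean (harch : ∀ x : D, 1 < x → ∀ y, ∃ n : ℕ, y ≤ x ^ n) (x y : D) :
    x ≤ y ∨ y ≤ x := by
  rcases eq_or_ne (x + y) 0 with h0 | h0
  · exact .inl ((le_self_add.trans_eq h0).trans zero_le)
  have h : (x + y)⁻¹ * x + (x + y)⁻¹ * y = 1 := by rw [← mul_add, inv_mul_cancel₀ h0]
  refine (eq_one_or_eq_one_of_add_eq_one harch h).symm.imp (fun hy ↦ ?_) fun hx ↦ ?_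
  · exact ((inv_mul_eq_one₀ h0).1 hy) ▸ le_self_add
  · exact ((inv_mul_eq_one₀ h0).1 hx) ▸ le_add_self

/-- The homomorphism from `ℤ_max` to the powers of `g`. The sign in `trop n ↦ g ^ (-n)` turns the
min-plus convention of `Tropical` into the order of `D`, in which addition is the supremum. -/
def tropicalHom (g : D) (hg : 1 ≤ g) : Tropical (WithTop ℤ) →+* D where
  toFun x := (untrop x).recTopCoe 0 fun n ↦ g ^ (-n)
  map_zero' := rfl
  map_one' := by
    change g ^ (-0 : ℤ) = 1
    rw [neg_zero, zpow_zero]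
  map_mul' x y := by
    induction x using Tropical.tropRec with | h a =>
    induction y using Tropical.tropRec with | h b =>
    cases a with
    | top => simp
    | coe m =>
      cases b with
      | top => simp
      | coe n =>
        change g ^ (-(m + n)) = g ^ (-m) * g ^ (-n)
        rw [neg_add, zpow_add₀ (zero_lt_one.trans_le hg).ne']
  map_add' x y := by
    have hanti : Antitone fun a : WithTop ℤ ↦ a.recTopCoe (C := fun _ ↦ D) 0 fun n ↦ g ^ (-n) := by
      intro a b hab
      cases b with
      | top => exact zero_le
      | coe n =>
        lift a to ℤ using ne_top_of_le_ne_top WithTop.coe_ne_top hab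
        exact zpow_le_zpow_right₀ hg (neg_le_neg (WithTop.coe_le_coe.1 hab))
    rw [untrop_add, add_eq_sup]
    exact hanti.map_inf _ _

lemma tropicalHom_trop_coe (g : D) (hg : 1 ≤ g) (n : ℤ) :
    tropicalHom g hg (trop (n : WithTop ℤ)) = g ^ (-n) :=
  rfl

lemma tropicalHom_injective {g : D} (hg : 1 < g) : Function.Injective (tropicalHom g hg.le) := by
  have hne (n : ℤ) : g ^ (-n) ≠ 0 := zpow_ne_zero _ (zero_lt_one.trans hg).ne'
  intro x y hxy
  induction x using Tropical.tropRec with | h a =>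
  induction y using Tropical.tropRec with | h b =>
  cases a with
  | top =>
    cases b with
    | top => rfl
    | coe n => exact absurd hxy.symm (hne n)
  | coe m =>
    cases b with
    | top => exact absurd hxy (hne m)
    | coe n => rw [neg_injective ((zpow_right_strictMono₀ hg).injective hxy)]

lemma tropicalHom_surjective {g : D} (hg : 1 ≤ g) (hgen : ∀ x : D, 0 < x → ∃ n : ℤ, g ^ n = x) :
    Function.Surjective (tropicalHom g hg) := by
  intro x
  rcases eq_or_ne x 0 with rfl | hx
  · exact ⟨0, map_zero _⟩
  · obtain ⟨n, rfl⟩ := hgen x (pos_iff_ne_zero.2 hx)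
    exact ⟨trop ((-n : ℤ) : WithTop ℤ), by rw [tropicalHom_trop_coe, neg_neg]⟩

end IdemDivisionSemiring

/-- `D` is finitely generated as a left semimodule over the powers `t ^ n`, `n : ℤ`, of `t`: the
products of such powers with the elements of some finite set generate `D` additively. -/
def FiniteOverZPowers {D : Type*} [DivisionSemiring D] (t : D) : Prop :=
  ∃ S : Finset D, AddSubmonoid.closure {y | ∃ n : ℤ, ∃ s ∈ S, y = t ^ n * s} = ⊤

namespace FiniteOverZPowers
variable {D : Type*} [IdemDivisionSemiring D] {t : D}

lemma exists_le_pow_mul_of_mem_closure (ht : 1 ≤ t) {S : Set D} {u : D} (hu : u ∈ upperBounds S)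
    {x : D} (hx : x ∈ AddSubmonoid.closure {y | ∃ n : ℤ, ∃ s ∈ S, y = t ^ n * s}) :
    ∃ n : ℕ, x ≤ t ^ n * u := by
  induction hx using AddSubmonoid.closure_induction with
  | mem y hy =>
    obtain ⟨n, s, hs, rfl⟩ := hy
    refine ⟨n.toNat, mul_le_mul' ?_ (hu hs)⟩
    rw [← zpow_natCast]
    exact zpow_le_zpow_right₀ ht n.self_le_toNat
  | zero => exact ⟨0, zero_le⟩
  | add y z _ _ ihy ihz =>
    obtain ⟨m, hm⟩ := ihy
    obtain ⟨n, hn⟩ := ihz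
    refine ⟨max m n, add_le (hm.trans ?_) (hn.trans ?_)⟩
    · gcongr
      exact le_max_left m n
    · gcongr
      exact le_max_right m n

lemma exists_le_pow (h : FiniteOverZPowers t) (ht : 1 ≤ t) (x : D) : ∃ n : ℕ, x ≤ t ^ n := by
  obtain ⟨S, hS⟩ := h
  have hbound (y : D) : ∃ n : ℕ, y ≤ t ^ n * S.sup id :=
    exists_le_pow_mul_of_mem_closure (S := S) ht (fun _ hs ↦ S.le_sup (f := id) hs)
      (hS ▸ AddSubmonoid.mem_top y)
  have hpos : 0 < S.sup id := by
    refine pos_iff_ne_zero.2 fun h0 ↦ ?_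
    obtain ⟨n, hn⟩ := hbound 1
    rw [h0, mul_zero] at hn
    exact one_ne_zero (le_zero_iff.1 hn)
  obtain ⟨n, hn⟩ := hbound (x * S.sup id)
  exact ⟨n, le_of_mul_le_mul_right hn hpos⟩

lemma finite_setOf_zpow_mul_between (h : FiniteOverZPowers t) (ht : 1 ≤ t) (s : D) :
    {y | ∃ n : ℤ, y = t ^ n * s ∧ ¬ y ≤ 1 ∧ ¬ t ≤ y}.Finite := by
  rcases eq_or_ne s 0 with rfl | hs
  · exact Set.finite_empty.subset fun y ⟨n, hy, hy1, _⟩ ↦ hy1 (by simp [hy])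
  have ht0 : 0 < t := zero_lt_one.trans_le ht
  obtain ⟨a, ha⟩ :=
    exists_zpow_le_of_forall_exists_le_pow (h.exists_le_pow ht) (pos_iff_ne_zero.2 hs)
  obtain ⟨b, hb⟩ := h.exists_le_pow ht s
  rw [← zpow_natCast] at hb
  refine ((Set.finite_Icc (-b : ℤ) (-a)).image fun n ↦ t ^ n * s).subset ?_
  rintro _ ⟨n, rfl, hn1, hnt⟩
  refine ⟨n, ⟨?_, ?_⟩, rfl⟩
  · by_contra! hlt
    refine hn1 ?_
    calc t ^ n * s ≤ t ^ n * t ^ (b : ℤ) := by gcongr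
      _ = t ^ (n + b) := (zpow_add₀ ht0.ne' _ _).symm
      _ ≤ 1 := zpow_le_one_of_nonpos₀ ht (by omega)
  · by_contra! hlt
    refine hnt ?_
    calc t = t ^ (1 : ℤ) := (zpow_one t).symm
      _ ≤ t ^ (n + a) := zpow_le_zpow_right₀ ht (by omega)
      _ = t ^ n * t ^ a := zpow_add₀ ht0.ne' _ _
      _ ≤ t ^ n * s := by gcongr

lemma finite_setOf_one_le_and_not_le (h : FiniteOverZPowers t) (ht : 1 ≤ t) :
    {x | 1 ≤ x ∧ ¬ t ≤ x}.Finite := by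
  have ⟨S, hS⟩ := h
  refine finite_setOf_le_and_not_le_of_closure_eq_top hS ?_
  refine (S.finite_toSet.biUnion fun s _ ↦ h.finite_setOf_zpow_mul_between ht s).subset ?_
  rintro y ⟨⟨n, s, hs, hy⟩, hy1, hyt⟩
  exact Set.mem_biUnion hs ⟨n, hy, hy1, hyt⟩

lemma exists_le_pow_of_one_lt (h : FiniteOverZPowers t) (ht : 1 ≤ t) {x : D} (hx : 1 < x) (y : D) :
    ∃ n : ℕ, y ≤ x ^ n := by
  obtain ⟨m, hm⟩ : ∃ m : ℕ, t ≤ x ^ m := by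
    by_contra! hnot
    have hmem (n : ℕ) : x ^ n ∈ {y | 1 ≤ y ∧ ¬ t ≤ y} :=
      ⟨one_le_pow_of_one_le' hx.le n, hnot n⟩
    exact Set.infinite_of_injective_forall_mem (pow_right_strictMono₀ hx).injective hmem
      (h.finite_setOf_one_le_and_not_le ht)
  obtain ⟨n, hn⟩ := h.exists_le_pow ht y
  exact ⟨m * n, hn.trans (pow_mul x m n ▸ pow_le_pow_left' hm n)⟩

lemma exists_isLeast_one_lt (h : FiniteOverZPowers t) (ht : 1 < t) :
    ∃ g : D, IsLeast {x | 1 < x} g := by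
  have hfin : (insert t {x | 1 < x ∧ ¬ t ≤ x}).Finite :=
    ((h.finite_setOf_one_le_and_not_le ht.le).subset fun x hx ↦ ⟨hx.1.le, hx.2⟩).insert t
  obtain ⟨g, hg⟩ := hfin.exists_minimal (Set.insert_nonempty _ _)
  have hle {x : D} (hx : x ∈ insert t {x | 1 < x ∧ ¬ t ≤ x}) : g ≤ x :=
    (IdemDivisionSemiring.le_total_of_archimedean
      (fun _ ↦ h.exists_le_pow_of_one_lt ht.le) g x).elim id (hg.le_of_le hx)
  refine ⟨g, ?_, fun x hx ↦ ?_⟩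
  · rcases hg.prop with rfl | hg1
    exacts [ht, hg1.1]
  · by_cases htx : t ≤ x
    · exact (hle (Set.mem_insert t _)).trans htx
    · exact hle (Set.mem_insert_of_mem t ⟨hx, htx⟩)

open IdemDivisionSemiring in
lemma exists_ringEquiv_tropical (h : FiniteOverZPowers t) (ht : 1 < t) :
    ∃ (n : ℕ) (e : Tropical (WithTop ℤ) ≃+* D), 0 < n ∧
      ∀ a : ℤ, e (trop (((n : ℤ) * a : ℤ) : WithTop ℤ)) = t ^ (-a) := by
  obtain ⟨g, hg⟩ := h.exists_isLeast_one_lt ht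
  have hg1 : 1 < g := hg.1
  have hgen (x : D) : 0 < x → ∃ n : ℤ, g ^ n = x :=
    exists_zpow_eq_of_isLeast_one_lt hg (h.exists_le_pow_of_one_lt ht.le hg1)
  obtain ⟨n, rfl⟩ := hgen t (zero_lt_one.trans ht)
  have hn : 0 < n := (one_lt_zpow_iff_right₀ hg1).1 ht
  lift n to ℕ using hn.le
  have hbij : Function.Bijective (tropicalHom g hg1.le) :=
    ⟨tropicalHom_injective hg1, tropicalHom_surjective hg1.le hgen⟩
  refine ⟨n, .ofBijective (tropicalHom g hg1.le) hbij, by exact_mod_cast hn, fun a ↦ ?_⟩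
  rw [RingEquiv.ofBijective_apply, tropicalHom_trop_coe, ← zpow_mul, mul_neg]

end FiniteOverZPowers

lemma add_self_of_ringHom {R S : Type*} [NonAssocSemiring R] [NonAssocSemiring S]
    (h : (1 : R) + 1 = 1) (f : R →+* S) (x : S) : x + x = x := by
  have h1 : (1 : S) + 1 = 1 := by rw [← map_one f, ← map_add, h]
  rw [← mul_one x, ← mul_add, h1]

section Tropical

lemma map_trop_coe_eq_zpow {F G : Type*} [DivisionMonoid G] [FunLike F (Tropical (WithTop ℤ)) G]
    [MonoidHomClass F (Tropical (WithTop ℤ)) G] (f : F) (a : ℤ) :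
    f (trop (a : WithTop ℤ)) = f (trop ((-1 : ℤ) : WithTop ℤ)) ^ (-a) := by
  let φ : Multiplicative ℤ →* G :=
    { toFun b := f (trop (b.toAdd : WithTop ℤ))
      map_one' := map_one f
      map_mul' b c := map_mul f (trop (b.toAdd : WithTop ℤ)) (trop (c.toAdd : WithTop ℤ)) }
  calc φ (.ofAdd a) = φ (.ofAdd (-1) ^ (-a)) := by rw [← ofAdd_zsmul]; simp
    _ = φ (.ofAdd (-1)) ^ (-a) := by
      simpa only [Units.val_zpow_eq_zpow_val, MonoidHom.coe_toHomUnits] using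
        congrArg Units.val (map_zpow φ.toHomUnits (.ofAdd (-1)) (-a))

lemma one_lt_map_trop_neg_one {R : Type*} [IdemSemiring R] {f : Tropical (WithTop ℤ) →+* R}
    (hf : Function.Injective f) : 1 < f (trop ((-1 : ℤ) : WithTop ℤ)) := by
  have hlt : trop ((-1 : ℤ) : WithTop ℤ) < 1 :=
    untrop_lt_iff.1 (WithTop.coe_lt_coe.2 neg_one_lt_zero)
  refine lt_of_le_of_ne ?_ (map_one f ▸ hf.ne hlt.ne')
  rw [← add_eq_right_iff_le, ← map_one f, ← map_add, Tropical.add_eq_right hlt.le]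

lemma finiteOverZPowers_map_trop_neg_one {D : Type*} [DivisionSemiring D]
    {f : Tropical (WithTop ℤ) →+* D}
    (hfin : ∃ S : Finset D, ∀ x : D,
      x ∈ AddSubmonoid.closure {y : D | ∃ a : Tropical (WithTop ℤ), ∃ s ∈ S, y = f a * s}) :
    FiniteOverZPowers (f (trop ((-1 : ℤ) : WithTop ℤ))) := by
  obtain ⟨S, hS⟩ := hfin
  refine ⟨S, top_unique fun x _ ↦ AddSubmonoid.closure_le.2 ?_ (hS x)⟩
  rintro _ ⟨a, s, hs, rfl⟩
  induction a using Tropical.tropRec with | h a =>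
  cases a with
  | top => simp
  | coe n =>
    exact AddSubmonoid.subset_closure ⟨-n, s, hs, by rw [← map_trop_coe_eq_zpow]⟩

end Tropical

theorem classification_of_finite_division_semialgebras_general {D : Type*} [DivisionSemiring D]
    (f : Tropical (WithTop ℤ) →+* D) (hf : Function.Injective f)
    (hfin : ∃ S : Finset D, ∀ x : D,
      x ∈ AddSubmonoid.closure {y : D | ∃ a : Tropical (WithTop ℤ), ∃ s ∈ S, y = f a * s}) :
    (∀ x y : D, x * y = y * x) ∧
      ∃ (n : ℕ) (φ : D ≃+* Tropical (WithTop ℤ)), 0 < n ∧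
        ∀ a : ℤ, φ (f (trop (a : WithTop ℤ))) = trop (((n : ℤ) * a : ℤ) : WithTop ℤ) := by
  let _ : IdemDivisionSemiring D := .ofDivisionSemiring
    (add_self_of_ringHom (Tropical.add_self 1) f)
  obtain ⟨n, e, hn, he⟩ :=
    (finiteOverZPowers_map_trop_neg_one hfin).exists_ringEquiv_tropical (one_lt_map_trop_neg_one hf)
  refine ⟨fun x y ↦ e.symm.injective (by rw [map_mul, map_mul, mul_comm]), n, e.symm, hn,
    fun a ↦ ?_⟩
  rw [RingEquiv.symm_apply_eq, he]
  exact map_trop_coe_eq_zpow f a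

/-- Every finite division semialgebra over `ℤ_max` is `F^(n)` for some positive integer `n`:
if `D` is a division semiring with idempotent addition and `f : ℤ_max →+* D` an injective
semiring homomorphism with central range making `D` a finitely generated left semimodule over
`ℤ_max`, then `D` is commutative and there is a semiring isomorphism
`φ : D ≃+* ℤ_max` with `φ (f (trop a)) = trop (n * a)` for all `a : ℤ`. -/
theorem classification_of_finite_division_semialgebras {D : Type*} [DivisionSemiring D]
    (hidem : ∀ x : D, x + x = x)
    (f : Tropical (WithTop ℤ) →+* D) (hf : Function.Injective f)
    (hcentral : ∀ a : Tropical (WithTop ℤ), f a ∈ Set.center D)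
    (hfin : ∃ S : Finset D, ∀ x : D,
      x ∈ AddSubmonoid.closure {y : D | ∃ a : Tropical (WithTop ℤ), ∃ s ∈ S, y = f a * s}) :
    (∀ x y : D, x * y = y * x) ∧
      ∃ (n : ℕ) (φ : D ≃+* Tropical (WithTop ℤ)), 0 < n ∧
        ∀ a : ℤ, φ (f (trop (a : WithTop ℤ))) = trop (((n : ℤ) * a : ℤ) : WithTop ℤ) := by
  exact classification_of_finite_division_semialgebras_general f hf hfin
end
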